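/- arXiv:1805.10770 — 6 statements merged into one kernel-verified Lean document; each statement's English description precedes it below -/
import Mathlib

section
/- Let R be a (not necessarily commutative) ring and let T be a binary word of length N with zero-positions T_0 of size m and one-positions T_1 of size n. For any elements α_1, …, α_m and β_1, …, β_n of R, the following identity holds: the sum over all bijections f : {1,…,m} → T_0 and all bijections g : {1,…,n} → T_1 of the products Φ_T^{f,g} equals the sum over all subsets I ⊆ {1,…,m} and J ⊆ {1,…,n} of (−1)^{m−|I|}(−1)^{n−|J|} times the product Γ'_N Γ'_{N−1} ⋯ Γ'_1, where Γ'_i = Σ_{p∈I} α_p if i ∈ T_0 and Γ'_i = Σ_{q∈J} β_q if i ∈ T_1. -/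
/-!
The identity is the polarization formula for multilinear maps, used twice. Expanding
`M (∑ p ∈ I, α p, …, ∑ p ∈ I, α p)` gives one term for each map from the slots of `M` into `I`, so
the signed sum over `I` is, by inclusion–exclusion on the set of values that a map misses, the sum
over the surjective maps; if there are as many slots as values, these are the bijections.

The ordered product `Γ_N ⋯ Γ_1` is multilinear in its factors. Currying it along the splitting of
the positions into `T₀` and `T₁` gives a multilinear map in the factors at `T₀` whose values are
multilinear maps in the factors at `T₁`, and the formula applies to each.
-/

open Finset Function

section Polarization

variable {ι ι' κ κ' K V W : Type*} [Fintype ι] [Fintype ι'] [Fintype κ] [Fintype κ']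
  [DecidableEq ι] [DecidableEq ι'] [DecidableEq κ] [DecidableEq κ']

theorem inclusion_exclusion_sum_surjective [AddCommGroup W] (F : (κ → ι) → W) :
    ∑ r with Surjective r, F r =
      ∑ I : Finset ι, (-1 : ℤ) ^ #Iᶜ • ∑ r ∈ Fintype.piFinset fun _ ↦ I, F r := by
  let missing (p : ι) : Finset (κ → ι) := {r | ∀ i, r i ≠ p}
  have surjective_eq_inf : ({r | Surjective r} : Finset (κ → ι)) =
      univ.inf fun p ↦ (missing p)ᶜ := by
    ext r
    simp_rw [mem_filter_univ, mem_inf]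
    simp [missing, Surjective]
  have inf_missing (J : Finset ι) : J.inf missing = Fintype.piFinset fun _ ↦ Jᶜ := by
    ext r
    simp only [missing, mem_inf, mem_filter_univ, Fintype.mem_piFinset, mem_compl]
    exact ⟨fun h i hi ↦ h _ hi i rfl, fun h p hp i hi ↦ h i (hi ▸ hp)⟩
  rw [surjective_eq_inf, inclusion_exclusion_sum_inf_compl, powerset_univ,
    ← Equiv.sum_comp (compl_involutive (α := Finset ι)).toPerm]
  simp [inf_missing]

theorem sum_equiv_symm_eq_sum_surjective [AddCommMonoid W]
    (hcard : Fintype.card κ = Fintype.card ι) (F : (κ → ι) → W) :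
    ∑ f : ι ≃ κ, F f.symm = ∑ r with Surjective r, F r := by
  have bijective_of_surjective {r : κ → ι} (hr : Surjective r) : Bijective r :=
    (Fintype.bijective_iff_surjective_and_card r).2 ⟨hr, hcard⟩
  refine sum_bij (fun f _ ↦ ⇑f.symm) (fun f _ ↦ by simp [f.symm.surjective])
    (fun f _ g _ h ↦ Equiv.symm_bijective.injective (DFunLike.coe_injective h))
    (fun r hr ↦ ?_) (fun _ _ ↦ rfl)
  exact ⟨(Equiv.ofBijective r (bijective_of_surjective (by simpa using hr))).symm, mem_univ _, rfl⟩

theorem multilinear_polarization [Semiring K] [AddCommMonoid V] [Module K V] [AddCommGroup W]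
    [Module K W] (hcard : Fintype.card κ = Fintype.card ι)
    (M : MultilinearMap K (fun _ : κ ↦ V) W) (α : ι → V) :
    ∑ f : ι ≃ κ, M (α ∘ f.symm) =
      ∑ I : Finset ι, (-1 : ℤ) ^ #Iᶜ • M fun _ ↦ ∑ p ∈ I, α p := by
  rw [sum_equiv_symm_eq_sum_surjective hcard fun r ↦ M (α ∘ r),
    inclusion_exclusion_sum_surjective]
  simp only [M.map_sum_finset (fun _ ↦ α), comp_def]

theorem multilinear_polarization_sumElim [CommSemiring K] [AddCommMonoid V] [Module K V]
    [AddCommGroup W] [Module K W] (hcard : Fintype.card κ = Fintype.card ι)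
    (hcard' : Fintype.card κ' = Fintype.card ι')
    (M : MultilinearMap K (fun _ : κ ⊕ κ' ↦ V) W) (α : ι → V) (β : ι' → V) :
    ∑ f : ι ≃ κ, ∑ g : ι' ≃ κ', M (Sum.elim (α ∘ f.symm) (β ∘ g.symm)) =
      ∑ I : Finset ι, ∑ J : Finset ι', ((-1 : ℤ) ^ #Iᶜ * (-1 : ℤ) ^ #Jᶜ) •
        M (Sum.elim (fun _ ↦ ∑ p ∈ I, α p) fun _ ↦ ∑ q ∈ J, β q) := by
  have polarize_left (v : κ' → V) : ∑ f : ι ≃ κ, M (Sum.elim (α ∘ f.symm) v) =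
      ∑ I : Finset ι, (-1 : ℤ) ^ #Iᶜ • M (Sum.elim (fun _ ↦ ∑ p ∈ I, α p) v) := by
    simpa using DFunLike.congr_fun (multilinear_polarization hcard M.currySum α) v
  have polarize_right (u : κ → V) : ∑ g : ι' ≃ κ', M (Sum.elim u (β ∘ g.symm)) =
      ∑ J : Finset ι', (-1 : ℤ) ^ #Jᶜ • M (Sum.elim u fun _ ↦ ∑ q ∈ J, β q) :=
    multilinear_polarization hcard' (M.currySum u) β
  rw [sum_comm]
  simp_rw [polarize_left]
  rw [sum_comm]
  simp_rw [← smul_sum, polarize_right, smul_sum, smul_smul]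

end Polarization

/-- The ordered product `v_N ⋯ v_1` in an algebra, as a multilinear map in its factors, so that it
can be polarized. It is Mathlib's increasing product with the positions reversed. -/
def descendingProd (K A : Type*) [CommSemiring K] [Semiring A] [Algebra K A] (N : ℕ) :
    MultilinearMap K (fun _ : Fin N ↦ A) A :=
  (MultilinearMap.mkPiAlgebraFin K N A).domDomCongr Fin.revPerm

theorem descendingProd_apply {K A : Type*} [CommSemiring K] [Semiring A] [Algebra K A] {N : ℕ}
    (v : Fin N → A) : descendingProd K A N v = (List.ofFn v).reverse.prod := by
  simp [descendingProd, List.ofFn_eq_map, ← List.map_reverse, List.finRange_reverse, comp_def]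

/-- The splitting of the positions of a binary word `t` into the zero-positions `T₀` and the
one-positions `T₁`, along which a multilinear map in all positions is curried. -/
def zerosSumOnes {κ : Type*} (t : κ → Bool) : {i // t i = false} ⊕ {i // t i = true} ≃ κ :=
  ((Equiv.refl _).sumCongr (Equiv.subtypeEquivRight fun _ ↦ by simp)).trans
    (Equiv.sumCompl fun i ↦ t i = false)

theorem elim_zerosSumOnes_symm {κ V : Type*} (t : κ → Bool) (a : {i // t i = false} → V)
    (b : {i // t i = true} → V) (i : κ) :
    Sum.elim a b ((zerosSumOnes t).symm i) =
      if h : t i = false then a ⟨i, h⟩ else b ⟨i, by simpa using h⟩ := by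
  obtain ⟨x, rfl⟩ := (zerosSumOnes t).surjective i
  rw [Equiv.symm_apply_apply]
  rcases x with ⟨i, hi⟩ | ⟨i, hi⟩ <;> simp [zerosSumOnes, hi]

/-- For a binary word `t` of length `N` with `m` zero-positions and `n` one-positions, and
ring elements `α₁,…,α_m`, `β₁,…,β_n`, the sum over all bijections `f : [m] ≃ T₀`,
`g : [n] ≃ T₁` of the ordered products `Γ_N ⋯ Γ_1` (with `Γᵢ = α_{f⁻¹ i}` for `i ∈ T₀`
and `Γᵢ = β_{g⁻¹ i}` for `i ∈ T₁`) equals the inclusion–exclusion sum over subsets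
`I ⊆ [m]`, `J ⊆ [n]` of `(−1)^{m−|I|}(−1)^{n−|J|}` times the ordered product `Γ'_N ⋯ Γ'_1`
with `Γ'ᵢ = ∑_{p∈I} α_p` for `i ∈ T₀` and `Γ'ᵢ = ∑_{q∈J} β_q` for `i ∈ T₁`. -/
theorem bint_eval_vacuum_expansion (R : Type*) [Ring R] (N m n : ℕ) (t : Fin N → Bool)
    (hm : (Finset.univ.filter fun i : Fin N => t i = false).card = m)
    (hn : (Finset.univ.filter fun i : Fin N => t i = true).card = n)
    (α : Fin m → R) (β : Fin n → R) :
    ∑ f : Fin m ≃ {i : Fin N // t i = false}, ∑ g : Fin n ≃ {i : Fin N // t i = true},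
      ((List.ofFn fun i : Fin N =>
        if h : t i = false then α (f.symm ⟨i, h⟩)
        else β (g.symm ⟨i, by simpa using h⟩)).reverse).prod
    = ∑ I : Finset (Fin m), ∑ J : Finset (Fin n),
        (-1 : R) ^ (m - I.card) * (-1 : R) ^ (n - J.card) *
          ((List.ofFn fun i : Fin N =>
            if t i = false then ∑ p ∈ I, α p else ∑ q ∈ J, β q).reverse).prod := by
  have card_zeros : Fintype.card {i // t i = false} = Fintype.card (Fin m) := by
    rw [Fintype.card_subtype, hm, Fintype.card_fin]
  have card_ones : Fintype.card {i // t i = true} = Fintype.card (Fin n) := by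
    rw [Fintype.card_subtype, hn, Fintype.card_fin]
  have polarization := multilinear_polarization_sumElim card_zeros card_ones
    ((descendingProd ℤ R N).domDomCongr (zerosSumOnes t).symm) α β
  simpa [descendingProd_apply, elim_zerosSumOnes_symm, card_compl] using polarization
end

section
/- Let k be a field of characteristic zero, R a unital associative k-algebra, and T a binary word of length N with zero-positions T_0 of size m and one-positions T_1 of size n. Fix 0 ≤ k' ≤ m and 0 ≤ l ≤ n and elements α_1, …, α_{k'}, β_1, …, β_l, γ, δ ∈ R, and extend the families by setting α_p = γ for k' < p ≤ m and β_q = δ for l < q ≤ n. Then the sum over all injections f : {1,…,k'} → T_0 and g : {1,…,l} → T_1 of Φ_T^{f,g} equals (1/((m−k')!(n−l)!)) times the sum over all subsets I ⊆ {1,…,m} and J ⊆ {1,…,n} of (−1)^{m−|I|}(−1)^{n−|J|} times the product Γ'_N Γ'_{N−1} ⋯ Γ'_1, where Γ'_i = Σ_{p∈I} α_p if i ∈ T_0 and Γ'_i = Σ_{q∈J} β_q if i ∈ T_1. -/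
/-- `Γᵢ^{f,g}`: for a position `i` of the binary word `t`, the element `α_{f⁻¹ i}` if
`i ∈ Im f`, `β_{g⁻¹ i}` if `i ∈ Im g`, `γ` if `i ∈ T₀ ∖ Im f` and `δ` if `i ∈ T₁ ∖ Im g`. -/
noncomputable def gammaFn {R : Type*} [Ring R] {N a b : ℕ} (t : Fin N → Bool)
    (f : Fin a ↪ {i : Fin N // t i = false}) (g : Fin b ↪ {i : Fin N // t i = true})
    (α : Fin a → R) (β : Fin b → R) (γ δ : R) (i : Fin N) : R :=
  if h0 : t i = false then
    if h : ∃ p, f p = ⟨i, h0⟩ then α h.choose else γ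
  else
    if h : ∃ q, g q = ⟨i, by simpa using h0⟩ then β h.choose else δ

/-- `Φ_T^{f,g} = Γ_N^{f,g} Γ_{N−1}^{f,g} ⋯ Γ_1^{f,g}`. -/
noncomputable def phiFn {R : Type*} [Ring R] {N a b : ℕ} (t : Fin N → Bool)
    (f : Fin a ↪ {i : Fin N // t i = false}) (g : Fin b ↪ {i : Fin N // t i = true})
    (α : Fin a → R) (β : Fin b → R) (γ δ : R) : R :=
  ((List.ofFn (gammaFn t f g α β γ δ)).reverse).prod

/-!
For a multilinear map `L`, expanding `L (∑_{p ∈ I} a_p, …, ∑_{p ∈ I} a_p)` gives the sum of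
`L (a ∘ r)` over all maps `r` with values in `I`, so by inclusion–exclusion the signed sum over `I`
is the sum over the surjective `r`. When there are as many variables as indices `p`, these are the
bijections. If moreover `a_p = γ` for all `p` outside a subset with `k'` elements, a term depends
only on the injection obtained by restricting the bijection to that subset, and every injection
arises from `(m - k')!` bijections.

The product `x_N ⋯ x_1` is multilinear in its factors at the zeros, with values in the multilinear
maps in its factors at the ones, so this applies once for each digit.
-/

open Finset Function

section Surjections

variable {ι κ A : Type*} [Fintype ι] [Fintype κ] [DecidableEq ι] [DecidableEq κ]

lemma sum_surjective_eq_sum_neg_one_pow_card_compl [AddCommGroup A] (F : (ι → κ) → A) :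
    ∑ r : ι → κ with Surjective r, F r
      = ∑ I : Finset κ, (-1 : ℤ) ^ #Iᶜ • ∑ r ∈ Fintype.piFinset fun _ : ι => I, F r := by
  let missing (p : κ) : Finset (ι → κ) := {r | ∀ i, r i ≠ p}
  have filter_surjective_eq_inf :
      ({r | Surjective r} : Finset (ι → κ)) = univ.inf fun p => (missing p)ᶜ := by
    ext r
    rw [mem_filter_univ]
    simp [missing, mem_inf, Surjective]
  have inf_missing_compl (I : Finset κ) : Iᶜ.inf missing = Fintype.piFinset fun _ : ι => I := by
    ext r
    simp only [missing, mem_inf, mem_compl, mem_filter_univ, Fintype.mem_piFinset]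
    exact ⟨fun h i => by_contra fun hi => h _ hi i rfl, fun h p hp i hi => hp (hi ▸ h i)⟩
  rw [filter_surjective_eq_inf, inclusion_exclusion_sum_inf_compl, powerset_univ,
    ← (compl_involutive (α := Finset κ)).bijective.sum_comp]
  simp only [inf_missing_compl]

lemma sum_surjective_eq_sum_equiv [AddCommMonoid A] (hcard : Fintype.card κ = Fintype.card ι)
    (F : (ι → κ) → A) :
    ∑ r : ι → κ with Surjective r, F r = ∑ τ : κ ≃ ι, F τ.symm := by
  refine (sum_bij (fun (τ : κ ≃ ι) _ => ⇑τ.symm) ?_ ?_ ?_ fun _ _ => rfl).symm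
  · exact fun τ _ => mem_filter_univ _ |>.2 τ.symm.surjective
  · exact fun τ _ τ' _ h => Equiv.symm_bijective.injective (DFunLike.coe_injective h)
  · intro r hr
    have hr_bij : Bijective r :=
      (Fintype.bijective_iff_surjective_and_card r).2 ⟨(mem_filter_univ _).1 hr, hcard.symm⟩
    exact ⟨(Equiv.ofBijective r hr_bij).symm, mem_univ _, rfl⟩

end Surjections

section Extensions

variable {κ₀ κ ι : Type*} [Fintype κ₀] [Fintype κ] [Fintype ι] [DecidableEq κ] [DecidableEq ι]

lemma card_equiv_extending_embedding (hcard : Fintype.card κ = Fintype.card ι)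
    (j : κ₀ ↪ κ) (f : κ₀ ↪ ι) :
    Fintype.card {τ : κ ≃ ι // j.trans τ.toEmbedding = f}
      = (Fintype.card κ - Fintype.card κ₀).factorial := by
  classical
  let e : Set.range j ≃ Set.range f :=
    (Equiv.ofInjective j j.injective).symm.trans (Equiv.ofInjective f f.injective)
  have e_apply (p : κ₀) : (e ⟨j p, p, rfl⟩ : ι) = f p := by
    simp [e, Equiv.ofInjective_symm_apply j.injective]
  have extends_iff (τ : κ ≃ ι) :
      j.trans τ.toEmbedding = f ↔ ∀ x : Set.range j, τ x = e x := by
    rw [DFunLike.ext_iff, Set.forall_subtype_range_iff]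
    exact forall_congr' fun p => by rw [e_apply]; rfl
  have card_compl_range_j :
      Fintype.card ((Set.range j)ᶜ : Set κ) = Fintype.card κ - Fintype.card κ₀ := by
    rw [Fintype.card_compl_set, Set.card_range_of_injective j.injective]
  have card_compl_range_f :
      Fintype.card ((Set.range f)ᶜ : Set ι) = Fintype.card κ - Fintype.card κ₀ := by
    rw [Fintype.card_compl_set, Set.card_range_of_injective f.injective, hcard]
  rw [Fintype.card_congr ((Equiv.subtypeEquivRight extends_iff).trans (Equiv.Set.compl e)),
    Fintype.card_equiv (Fintype.equivOfCardEq (card_compl_range_j.trans card_compl_range_f.symm)),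
    card_compl_range_j]

lemma sum_embedding_trans_equiv {A : Type*} [AddCommMonoid A]
    (hcard : Fintype.card κ = Fintype.card ι) (j : κ₀ ↪ κ) (F : (κ₀ ↪ ι) → A) :
    ∑ τ : κ ≃ ι, F (j.trans τ.toEmbedding)
      = (Fintype.card κ - Fintype.card κ₀).factorial • ∑ f, F f := by
  classical
  rw [← Fintype.sum_fiberwise (fun τ : κ ≃ ι => j.trans τ.toEmbedding), smul_sum]
  refine sum_congr rfl fun f _ => ?_
  rw [Fintype.sum_congr _ _ fun τ => congrArg F τ.2, sum_const, card_univ,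
    card_equiv_extending_embedding hcard]

end Extensions

lemma extend_comp_equiv_symm {κ₀ κ ι X : Type*} (j : κ₀ ↪ κ) (τ : κ ≃ ι) (α : κ₀ → X) (γ : X) :
    extend j α (const κ γ) ∘ τ.symm = extend (j.trans τ.toEmbedding) α (const ι γ) := by
  ext i
  have h := congrFun (j.injective.extend_comp τ.injective α (const ι γ)) i
  rw [Equiv.extend_apply] at h
  exact h.symm

section Polarization

variable {K M M' ι κ₀ κ : Type*} [AddCommMonoid M] [AddCommGroup M'] [Fintype ι]
  [Fintype κ₀] [Fintype κ] [DecidableEq κ]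

lemma multilinearMap_polarization [Semiring K] [Module K M] [Module K M']
    [DecidableEq ι] (hcard : Fintype.card κ = Fintype.card ι)
    (L : MultilinearMap K (fun _ : ι => M) M') (a : κ → M) :
    ∑ I : Finset κ, (-1 : ℤ) ^ #Iᶜ • L (fun _ => ∑ p ∈ I, a p)
      = ∑ τ : κ ≃ ι, L (a ∘ τ.symm) := by
  rw [← sum_surjective_eq_sum_equiv hcard fun r => L (a ∘ r),
    sum_surjective_eq_sum_neg_one_pow_card_compl]
  simp only [L.map_sum_finset (fun _ p => a p), comp_def]

lemma multilinearMap_polarization_extend [Semiring K] [Module K M] [Module K M']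
    (hcard : Fintype.card κ = Fintype.card ι) (j : κ₀ ↪ κ)
    (L : MultilinearMap K (fun _ : ι => M) M') (α : κ₀ → M) (γ : M) :
    ∑ I : Finset κ, (-1 : ℤ) ^ #Iᶜ • L (fun _ => ∑ p ∈ I, extend j α (const κ γ) p)
      = (Fintype.card κ - Fintype.card κ₀).factorial •
          ∑ f : κ₀ ↪ ι, L (extend f α (const ι γ)) := by
  classical
  rw [multilinearMap_polarization hcard, ← sum_embedding_trans_equiv hcard j]
  simp only [extend_comp_equiv_symm]

lemma multilinearMap_polarization_extend_sum [CommSemiring K] [Module K M] [Module K M']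
    {ι' κ₀' κ' : Type*} [Fintype ι'] [Fintype κ₀'] [Fintype κ'] [DecidableEq κ']
    (hcard : Fintype.card κ = Fintype.card ι) (hcard' : Fintype.card κ' = Fintype.card ι')
    (j : κ₀ ↪ κ) (j' : κ₀' ↪ κ') (L : MultilinearMap K (fun _ : ι ⊕ ι' => M) M')
    (α : κ₀ → M) (β : κ₀' → M) (γ δ : M) :
    ∑ I : Finset κ, ∑ J : Finset κ', (-1 : ℤ) ^ #Iᶜ • (-1 : ℤ) ^ #Jᶜ •
        L (Sum.elim (fun _ => ∑ p ∈ I, extend j α (const κ γ) p)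
          (fun _ => ∑ q ∈ J, extend j' β (const κ' δ) q))
      = ((Fintype.card κ - Fintype.card κ₀).factorial *
          (Fintype.card κ' - Fintype.card κ₀').factorial) •
          ∑ f : κ₀ ↪ ι, ∑ g : κ₀' ↪ ι',
            L (Sum.elim (extend f α (const ι γ)) (extend g β (const ι' δ))) := by
  set c := (Fintype.card κ - Fintype.card κ₀).factorial
  set c' := (Fintype.card κ' - Fintype.card κ₀').factorial
  set x : Finset κ → ι → M := fun I _ => ∑ p ∈ I, extend j α (const κ γ) p
  set y : Finset κ' → ι' → M := fun J _ => ∑ q ∈ J, extend j' β (const κ' δ) q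
  have polarize_left : ∑ I, (-1 : ℤ) ^ #Iᶜ • L.currySum (x I)
      = c • ∑ f : κ₀ ↪ ι, L.currySum (extend f α (const ι γ)) :=
    multilinearMap_polarization_extend hcard j L.currySum α γ
  have polarize_right (u : ι → M) : ∑ J, (-1 : ℤ) ^ #Jᶜ • L.currySum u (y J)
      = c' • ∑ g : κ₀' ↪ ι', L.currySum u (extend g β (const ι' δ)) :=
    multilinearMap_polarization_extend hcard' j' (L.currySum u) β δ
  calc ∑ I, ∑ J, (-1 : ℤ) ^ #Iᶜ • (-1 : ℤ) ^ #Jᶜ • L.currySum (x I) (y J)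
      = ∑ I, (-1 : ℤ) ^ #Iᶜ • c' •
          ∑ g : κ₀' ↪ ι', L.currySum (x I) (extend g β (const ι' δ)) := by
        simp only [← smul_sum, polarize_right]
    _ = c' • ∑ g : κ₀' ↪ ι',
          (∑ I, (-1 : ℤ) ^ #Iᶜ • L.currySum (x I)) (extend g β (const ι' δ)) := by
        simp only [smul_comm _ c', ← smul_sum, _root_.sum_apply, _root_.smul_apply]
        rw [sum_comm]
        simp only [smul_sum]
    _ = (c * c') • ∑ f : κ₀ ↪ ι, ∑ g : κ₀' ↪ ι',
          L.currySum (extend f α (const ι γ)) (extend g β (const ι' δ)) := by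
        rw [polarize_left, mul_comm, mul_smul, sum_comm]
        simp only [_root_.sum_apply, _root_.smul_apply, smul_sum]

end Polarization

section Words

variable {ι : Type*} (t : ι → Bool)

/-- The decomposition `T₀ ⊔ T₁` of the set of positions of a binary word `t`, used to pass from
families indexed by the positions to pairs of families indexed by the zeros and by the ones. -/
def zerosSumOnesEquiv : {i // t i = false} ⊕ {i // t i = true} ≃ ι :=
  ((Equiv.refl _).sumCongr (Equiv.subtypeEquivRight fun _ => by simp)).trans
    (Equiv.sumCompl fun i => t i = false)

lemma elim_zerosSumOnesEquiv_symm {X : Type*} (x : {i // t i = false} → X)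
    (y : {i // t i = true} → X) (i : ι) :
    Sum.elim x y ((zerosSumOnesEquiv t).symm i)
      = if h : t i = false then x ⟨i, h⟩ else y ⟨i, by simpa using h⟩ := by
  split_ifs with h
  · have symm_eq_inl : (zerosSumOnesEquiv t).symm i = .inl ⟨i, h⟩ := (Equiv.symm_apply_eq _).2 rfl
    rw [symm_eq_inl, Sum.elim_inl]
  · have symm_eq_inr : (zerosSumOnesEquiv t).symm i = .inr ⟨i, by simpa using h⟩ :=
      (Equiv.symm_apply_eq _).2 rfl
    rw [symm_eq_inr, Sum.elim_inr]

end Words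

lemma reverse_ofFn {X : Type*} {N : ℕ} (v : Fin N → X) :
    (List.ofFn v).reverse = List.ofFn (v ∘ Fin.rev) := by
  simp [List.ofFn_eq_map, ← List.map_reverse, List.finRange_reverse]

/-- The product `x_N ⋯ x_1` as a multilinear map. Its variables are indexed by a disjoint sum, the
zeros of the word `t` on the left and the ones on the right, so that currying separates the two
digits. -/
noncomputable def wordProd (K A : Type*) [CommSemiring K] [Semiring A] [Algebra K A] {N : ℕ}
    (t : Fin N → Bool) :
    MultilinearMap K (fun _ : {i // t i = false} ⊕ {i // t i = true} => A) A :=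
  (MultilinearMap.mkPiAlgebraFin K N A).domDomCongr
    (Fin.revPerm.trans (zerosSumOnesEquiv t).symm)

lemma wordProd_elim {K A : Type*} [CommSemiring K] [Semiring A] [Algebra K A] {N : ℕ}
    (t : Fin N → Bool) (x : {i // t i = false} → A) (y : {i // t i = true} → A) :
    wordProd K A t (Sum.elim x y) = (List.ofFn fun i =>
      if h : t i = false then x ⟨i, h⟩ else y ⟨i, by simpa using h⟩).reverse.prod := by
  simp only [← elim_zerosSumOnesEquiv_symm, reverse_ofFn]
  rfl

lemma phiFn_eq_wordProd (K : Type*) {R : Type*} [CommSemiring K] [Ring R] [Algebra K R]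
    {N a b : ℕ} (t : Fin N → Bool) (f : Fin a ↪ {i // t i = false})
    (g : Fin b ↪ {i // t i = true}) (α : Fin a → R) (β : Fin b → R) (γ δ : R) :
    phiFn t f g α β γ δ
      = wordProd K R t (Sum.elim (extend f α (const _ γ)) (extend g β (const _ δ))) := by
  classical
  simp only [wordProd_elim, extend_def]
  rfl

lemma extend_castLE_const {X : Type*} {a m : ℕ} (ha : a ≤ m) (α : Fin a → X) (γ : X) (p : Fin m) :
    extend (Fin.castLE ha) α (const (Fin m) γ) p = if h : (p : ℕ) < a then α ⟨p, h⟩ else γ := by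
  split_ifs with h
  · exact (Fin.castLE_injective ha).extend_apply α _ ⟨p, h⟩
  · refine extend_apply' _ _ _ ?_
    rintro ⟨q, rfl⟩
    exact h q.2

theorem bint_eval_ket_expansion_general {R : Type*} [Ring R] {N m n k' l : ℕ} (t : Fin N → Bool)
    (hm : #{i | t i = false} = m) (hn : #{i | t i = true} = n) (hk : k' ≤ m) (hl : l ≤ n)
    (α : Fin k' → R) (β : Fin l → R) (γ δ : R) :
    ∑ I : Finset (Fin m), ∑ J : Finset (Fin n),
        (-1 : R) ^ (m - #I) * (-1 : R) ^ (n - #J) *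
          (List.ofFn fun i : Fin N =>
            if t i = false then ∑ p ∈ I, (if h : (p : ℕ) < k' then α ⟨p, h⟩ else γ)
            else ∑ q ∈ J, (if h : (q : ℕ) < l then β ⟨q, h⟩ else δ)).reverse.prod
      = ((m - k').factorial * (n - l).factorial) •
          ∑ f : Fin k' ↪ {i // t i = false}, ∑ g : Fin l ↪ {i // t i = true},
            phiFn t f g α β γ δ := by
  have card_zeros : Fintype.card (Fin m) = Fintype.card {i // t i = false} := by
    rw [Fintype.card_fin, Fintype.card_subtype, hm]
  have card_ones : Fintype.card (Fin n) = Fintype.card {i // t i = true} := by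
    rw [Fintype.card_fin, Fintype.card_subtype, hn]
  have polarized := multilinearMap_polarization_extend_sum card_zeros card_ones
    (Fin.castLEEmb hk) (Fin.castLEEmb hl) (wordProd ℤ R t) α β γ δ
  simp only [← phiFn_eq_wordProd] at polarized
  simpa [wordProd_elim, extend_castLE_const, card_compl, mul_assoc] using polarized

/-- For a binary word with `m` zeros and `n` ones, `0 ≤ k' ≤ m`, `0 ≤ l ≤ n`, and elements
`α₁,…,α_{k'}, β₁,…,β_l, γ, δ` of a `k`-algebra `R` (char `k` = 0), extending the families by
`γ` resp. `δ`, the sum over all injections `f : [k'] ↪ T₀`, `g : [l] ↪ T₁` of `Φ_T^{f,g}`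
equals `1/((m−k')!(n−l)!)` times the inclusion–exclusion sum over subsets `I ⊆ [m]`,
`J ⊆ [n]`. -/
theorem bint_eval_ket_expansion (k : Type*) [Field k] [CharZero k]
    (R : Type*) [Ring R] [Algebra k R]
    (N m n k' l : ℕ) (t : Fin N → Bool)
    (hm : (Finset.univ.filter fun i : Fin N => t i = false).card = m)
    (hn : (Finset.univ.filter fun i : Fin N => t i = true).card = n)
    (hk : k' ≤ m) (hl : l ≤ n)
    (α : Fin k' → R) (β : Fin l → R) (γ δ : R) :
    ∑ f : Fin k' ↪ {i : Fin N // t i = false}, ∑ g : Fin l ↪ {i : Fin N // t i = true},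
      phiFn t f g α β γ δ
    = (((m - k').factorial * (n - l).factorial : ℕ) : k)⁻¹ •
        ∑ I : Finset (Fin m), ∑ J : Finset (Fin n),
          (-1 : R) ^ (m - I.card) * (-1 : R) ^ (n - J.card) *
            ((List.ofFn fun i : Fin N =>
              if t i = false then
                ∑ p ∈ I, (if h : (p : ℕ) < k' then α ⟨p, h⟩ else γ)
              else
                ∑ q ∈ J, (if h : (q : ℕ) < l then β ⟨q, h⟩ else δ)).reverse).prod := by
  rw [eq_inv_smul_iff₀ (mod_cast by positivity), Nat.cast_smul_eq_nsmul]
  exact (bint_eval_ket_expansion_general t hm hn hk hl α β γ δ).symm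
end

section
/- Let k be a field of characteristic zero and R a unital associative k-algebra. Let T_1, …, T_r be binary words each containing exactly m zeros and exactly n ones, and let c_1, …, c_r ∈ k. Suppose that Σ_{s=1}^r c_s · w_{T_s}(α, β) = 0 for all α, β ∈ R. Then for all 0 ≤ k' ≤ m, 0 ≤ l ≤ n and all elements α_1, …, α_{k'}, β_1, …, β_l, γ, δ ∈ R we have Σ_{s=1}^r c_s · (Σ_{f,g} Φ_{T_s}^{f,g}) = 0, where the inner sum is over all injections f : {1,…,k'} → (T_s)_0 and g : {1,…,l} → (T_s)_1. -/
open Finset Function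

lemma sum_filter_eq_zero_of_forall_sum_prod_pow_smul_eq_zero {k M σ κ : Type*} [CommRing k]
    [IsDomain k] [Infinite k] [AddCommMonoid M] [Module k M] [Module.Projective k M] [Fintype σ]
    [DecidableEq (σ → ℕ)] [Fintype κ] {d : κ → σ → ℕ} {v : κ → M}
    (h : ∀ x : σ → k, ∑ j, (∏ s, x s ^ d j s) • v j = 0) (e : σ → ℕ) :
    ∑ j with d j = e, v j = 0 := by
  rw [← Module.forall_dual_apply_eq_zero_iff k]
  intro L
  have poly_eq_zero :
      ∑ j, MvPolynomial.monomial (Finsupp.equivFunOnFinite.symm (d j)) (L (v j)) = 0 := by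
    refine MvPolynomial.funext fun x => ?_
    simpa [MvPolynomial.eval_monomial, Finsupp.prod_fintype, mul_comm] using congrArg L (h x)
  classical
  rw [map_sum, sum_filter]
  simpa only [MvPolynomial.coeff_sum, MvPolynomial.coeff_monomial, MvPolynomial.coeff_zero,
    EmbeddingLike.apply_eq_iff_eq] using
    congrArg (MvPolynomial.coeff (Finsupp.equivFunOnFinite.symm e)) poly_eq_zero

section Choices

variable {ι σ : Type*} [Fintype ι] [DecidableEq σ]

lemma prod_optionElim_one [Fintype σ] {k : Type*} [CommMonoid k] (φ : ι → Option σ) (x : σ → k) :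
    ∏ i, (φ i).elim 1 x = ∏ s, x s ^ #{i | φ i = some s} := by
  rw [← prod_fiberwise' univ φ fun o => o.elim 1 x, Fintype.prod_option]
  simp

lemma card_filter_partialInv_eq_some (e : σ ↪ ι) (s : σ) :
    #{i | partialInv e i = some s} = 1 := by
  rw [card_eq_one]
  exact ⟨e s, by ext i; simpa [eq_comm] using e.injective.isPartialInv s i⟩

lemma exists_partialInv_eq_of_card_filter_eq_one {φ : ι → Option σ}
    (h : ∀ s, #{i | φ i = some s} = 1) : ∃ e : σ ↪ ι, partialInv e = φ := by
  simp only [card_eq_one, eq_singleton_iff_unique_mem, mem_filter_univ] at h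
  choose pos eq_some unique using h
  have injective_pos : Injective pos := fun s s' hs =>
    Option.some_injective σ <| by rw [← eq_some s, hs, eq_some s']
  refine ⟨⟨pos, injective_pos⟩, funext fun i => Option.ext fun s => ?_⟩
  exact (injective_pos.isPartialInv s i).trans
    ⟨fun h => h ▸ eq_some s, fun h => (unique s i h).symm⟩

-- A choice `φ` takes the constant summand at position `i` if `φ i = none` and the summand of the
-- variable `s` if `φ i = some s`.
lemma sum_embedding_eq_sum_filter_card_eq_one [Fintype σ] [DecidableEq ι] {M : Type*}
    [AddCommMonoid M] (G : (ι → Option σ) → M) :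
    ∑ e : σ ↪ ι, G (partialInv e) =
      ∑ φ : ι → Option σ with (fun s => #{i | φ i = some s}) = 1, G φ := by
  refine sum_nbij (fun e => partialInv e) (fun e _ => ?_) (fun e _ e' _ h => ?_) (fun φ hφ => ?_)
    fun _ _ => rfl
  · exact mem_filter_univ _ |>.2 <| funext <| card_filter_partialInv_eq_some e
  · refine DFunLike.ext e e' fun s => ?_
    have h' : partialInv e' (e s) = some s :=
      (congrFun h (e s)).symm.trans (partialInv_left e.injective s)
    exact ((e'.injective.isPartialInv s _).1 h').symm
  · obtain ⟨e, he⟩ := exists_partialInv_eq_of_card_filter_eq_one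
      (congrFun (mem_filter.1 hφ).2)
    exact ⟨e, mem_coe.2 (mem_univ e), he⟩

end Choices

section Multilinear

variable {k σ M : Type*} [Fintype σ] [AddCommMonoid M]

lemma multilinearMap_add_sum_smul [CommSemiring k] [Module k M] [DecidableEq σ] {ι : Type*}
    [Fintype ι] [DecidableEq ι] {E : ι → Type*} [∀ i, AddCommMonoid (E i)] [∀ i, Module k (E i)]
    (F : MultilinearMap k E M) (u : ∀ i, E i) (w : ∀ i, σ → E i) (x : σ → k) :
    F (fun i => u i + ∑ s, x s • w i s) =
      ∑ φ : ι → Option σ, (∏ s, x s ^ #{i | φ i = some s}) •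
        F fun i => (φ i).elim (u i) (w i) := by
  have letter_eq_sum (i : ι) : u i + ∑ s, x s • w i s =
      ∑ o : Option σ, o.elim 1 x • o.elim (u i) (w i) := by
    simp [Fintype.sum_option]
  simp only [letter_eq_sum, F.map_sum, F.map_smul_univ, prod_optionElim_one]

lemma sum_sum_embedding_eq_zero [CommRing k] [IsDomain k] [Infinite k] [Module k M]
    [Module.Projective k M] {κ : Type*} [Fintype κ] {ι : κ → Type*} [∀ j, Fintype (ι j)]
    {E : ∀ j, ι j → Type*} [∀ j i, AddCommMonoid (E j i)] [∀ j i, Module k (E j i)]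
    (F : ∀ j, MultilinearMap k (E j) M) (u : ∀ j i, E j i) (w : ∀ j i, σ → E j i)
    (h : ∀ x : σ → k, ∑ j, F j (fun i => u j i + ∑ s, x s • w j i s) = 0) :
    ∑ j, ∑ e : σ ↪ ι j, F j (fun i => (partialInv e i).elim (u j i) (w j i)) = 0 := by
  classical
  simp only [multilinearMap_add_sum_smul, ← Fintype.sum_sigma'] at h
  have coeff_eq_zero := sum_filter_eq_zero_of_forall_sum_prod_pow_smul_eq_zero h 1
  rw [sum_filter, Fintype.sum_sigma] at coeff_eq_zero
  rw [← coeff_eq_zero]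
  refine sum_congr rfl fun j _ => ?_
  rw [← sum_filter]
  exact sum_embedding_eq_sum_filter_card_eq_one fun φ =>
    F j fun i => (φ i).elim (u j i) (w j i)

end Multilinear

/-- The injective placements of the variables `σ` at positions of the word `t` that put every
variable `s` at a position carrying its letter `ℓ s`. -/
abbrev LetterEmbedding {σ ι A : Type*} (t : ι → A) (ℓ : σ → A) : Type _ :=
  {e : σ ↪ ι // ∀ s, t (e s) = ℓ s}

section Letters

variable {k A E M σ : Type*} [AddCommMonoid E] [AddCommMonoid M] [Fintype σ] [DecidableEq A]

lemma sum_embedding_ite_eq_sum_letterEmbedding [CommSemiring k] [Module k E] [Module k M]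
    {ι : Type*} [Fintype ι] (F : MultilinearMap k (fun _ : ι => E) M) (t : ι → A) (ℓ : σ → A)
    (u : A → E) (v : σ → E) :
    ∑ e : σ ↪ ι, F (fun i => (partialInv e i).elim (u (t i))
        fun s => if t i = ℓ s then v s else 0) =
      ∑ e : LetterEmbedding t ℓ, F (fun i => (partialInv e.1 i).elim (u (t i)) v) := by
  rw [← Finset.sum_subtype (univ.filter fun e : σ ↪ ι => ∀ s, t (e s) = ℓ s) (by simp)
    fun e => F (fun i => (partialInv e i).elim (u (t i)) v), sum_filter]
  refine sum_congr rfl fun e _ => ?_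
  split_ifs with respects
  · congr! 2 with i
    rcases hi : partialInv e i with _ | s
    · rfl
    · obtain rfl := (e.injective.isPartialInv s i).1 hi
      simp [respects s]
  · obtain ⟨s, hs⟩ := not_forall.1 respects
    refine F.map_coord_zero (e s) ?_
    simp [partialInv_left e.injective, hs]

theorem sum_sum_letterEmbedding_eq_zero [CommRing k] [IsDomain k] [Infinite k] [Module k E]
    [Module k M] [Module.Projective k M] {κ : Type*} [Fintype κ] {ι : κ → Type*}
    [∀ j, Fintype (ι j)] (F : ∀ j, MultilinearMap k (fun _ : ι j => E) M) (t : ∀ j, ι j → A)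
    (h : ∀ z : A → E, ∑ j, F j (fun i => z (t j i)) = 0)
    (ℓ : σ → A) (u : A → E) (v : σ → E) :
    ∑ j, ∑ e : LetterEmbedding (t j) ℓ,
      F j (fun i => (partialInv e.1 i).elim (u (t j i)) v) = 0 := by
  simp only [← sum_embedding_ite_eq_sum_letterEmbedding]
  exact sum_sum_embedding_eq_zero F (fun j i => u (t j i)) _ fun x =>
    h fun a => u a + ∑ s, x s • if a = ℓ s then v s else 0

end Letters

section BinaryWords

/-- The product `u_N ⋯ u_1` of the letters of a word of length `N`, read from right to left, as a
multilinear map. -/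
def reverseProd (k R : Type*) [CommSemiring k] [Semiring R] [Algebra k R] (N : ℕ) :
    MultilinearMap k (fun _ : Fin N => R) R :=
  (MultilinearMap.mkPiAlgebraFin k N R).domDomCongr Fin.revPerm

lemma reverseProd_apply {k R : Type*} [CommSemiring k] [Semiring R] [Algebra k R] {N : ℕ}
    (u : Fin N → R) : reverseProd k R N u = (List.ofFn u).reverse.prod := by
  have ofFn_rev : List.ofFn (fun i => u i.rev) = (List.ofFn u).reverse :=
    List.ext_getElem (by simp) fun i _ _ => by
      simp only [List.getElem_ofFn, List.getElem_reverse, List.length_ofFn]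
      congr 1
      ext
      simp only [Fin.val_rev]
      omega
  simp [reverseProd, ofFn_rev]

/-- Pairs of injections into the zeros and into the ones of a binary word, as placements of the
disjoint union of the variables: `Sum.isRight` assigns the letter `0` to the left summand and `1` to
the right one. -/
def prodEmbeddingEquivLetterEmbedding {α β ι : Type*} (t : ι → Bool) :
    (α ↪ {i // t i = false}) × (β ↪ {i // t i = true}) ≃
      LetterEmbedding t (Sum.isRight : α ⊕ β → Bool) where
  toFun fg :=
    ⟨⟨Sum.elim (fun p => (fg.1 p).1) (fun q => (fg.2 q).1),
      (Subtype.val_injective.comp fg.1.injective).sumElim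
        (Subtype.val_injective.comp fg.2.injective) fun p q h => by
          have := (fg.1 p).2.symm.trans ((congrArg t h).trans (fg.2 q).2)
          contradiction⟩,
      Sum.rec (fun p => (fg.1 p).2) (fun q => (fg.2 q).2)⟩
  invFun e :=
    (⟨fun p => ⟨e.1 (.inl p), e.2 _⟩, fun _ _ h =>
        Sum.inl_injective (e.1.injective (congrArg Subtype.val h))⟩,
      ⟨fun q => ⟨e.1 (.inr q), e.2 _⟩, fun _ _ h =>
        Sum.inr_injective (e.1.injective (congrArg Subtype.val h))⟩)
  left_inv _ := rfl
  right_inv e := Subtype.ext <| DFunLike.ext _ _ <| Sum.rec (fun _ => rfl) fun _ => rfl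

variable {R : Type*} [Ring R] {N a b : ℕ} (t : Fin N → Bool)
  (f : Fin a ↪ {i : Fin N // t i = false}) (g : Fin b ↪ {i : Fin N // t i = true})
  (α : Fin a → R) (β : Fin b → R) (γ δ : R)

lemma gammaFn_left (p : Fin a) : gammaFn t f g α β γ δ (f p) = α p := by
  have hp : ∃ p', f p' = ⟨f p, (f p).2⟩ := ⟨p, rfl⟩
  rw [gammaFn, dif_pos (f p).2, dif_pos hp, f.injective hp.choose_spec]

lemma gammaFn_right (q : Fin b) : gammaFn t f g α β γ δ (g q) = β q := by
  have hq : ∃ q', g q' = ⟨g q, (g q).2⟩ := ⟨q, rfl⟩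
  rw [gammaFn, dif_neg (by simp [(g q).2]), dif_pos hq, g.injective hq.choose_spec]

lemma gammaFn_of_forall_ne {i : Fin N} (hf : ∀ p, (f p).1 ≠ i) (hg : ∀ q, (g q).1 ≠ i) :
    gammaFn t f g α β γ δ i = if t i then δ else γ := by
  unfold gammaFn
  grind

lemma gammaFn_eq_elim_partialInv (i : Fin N) :
    gammaFn t f g α β γ δ i =
      (partialInv (prodEmbeddingEquivLetterEmbedding t (f, g)).1 i).elim
        (if t i then δ else γ) (Sum.elim α β) := by
  set e := (prodEmbeddingEquivLetterEmbedding t (f, g)).1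
  have partialInv_eq_some_iff (s) : partialInv e i = some s ↔ e s = i :=
    e.injective.isPartialInv s i
  rcases hi : partialInv e i with _ | p | q
  · have ne (s) : e s ≠ i := by simp [← partialInv_eq_some_iff, hi]
    exact gammaFn_of_forall_ne t f g α β γ δ (fun p => ne (.inl p)) fun q => ne (.inr q)
  · obtain rfl := (partialInv_eq_some_iff _).1 hi
    exact gammaFn_left t f g α β γ δ p
  · obtain rfl := (partialInv_eq_some_iff _).1 hi
    exact gammaFn_right t f g α β γ δ q

lemma sum_sum_phiFn_eq_sum_letterEmbedding :
    ∑ f : Fin a ↪ {i : Fin N // t i = false}, ∑ g : Fin b ↪ {i : Fin N // t i = true},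
        phiFn t f g α β γ δ =
      ∑ e : LetterEmbedding t (Sum.isRight : Fin a ⊕ Fin b → Bool),
        (List.ofFn fun i => (partialInv e.1 i).elim (if t i then δ else γ)
          (Sum.elim α β)).reverse.prod := by
  rw [← Fintype.sum_prod_type']
  refine Fintype.sum_equiv (prodEmbeddingEquivLetterEmbedding t) _ _ fun ⟨f, g⟩ => ?_
  simp only [phiFn, ← gammaFn_eq_elim_partialInv]

end BinaryWords

theorem bint_lincomb_zero_on_kets_general {k R κ : Type*} [CommRing k] [IsDomain k] [Infinite k]
    [Ring R] [Algebra k R] [Module.Projective k R] [Fintype κ] {N : κ → ℕ}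
    (T : ∀ s, Fin (N s) → Bool) (c : κ → k)
    (hdep : ∀ α β : R,
      ∑ s, c s • ((List.ofFn fun i => if T s i then β else α).reverse).prod = 0)
    {a b : ℕ} (α : Fin a → R) (β : Fin b → R) (γ δ : R) :
    ∑ s, c s •
      (∑ f : Fin a ↪ {i : Fin (N s) // T s i = false},
        ∑ g : Fin b ↪ {i : Fin (N s) // T s i = true},
          phiFn (T s) f g α β γ δ) = 0 := by
  have words_eq_zero (z : Bool → R) :
      ∑ s, (c s • reverseProd k R (N s)) (fun i => z (T s i)) = 0 := by
    have letter_eq_ite (t : Bool) : z t = if t then z true else z false := by cases t <;> rfl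
    simpa only [letter_eq_ite (T _ _), smul_apply, reverseProd_apply] using
      hdep (z false) (z true)
  simpa only [sum_sum_phiFn_eq_sum_letterEmbedding, smul_sum, smul_apply, reverseProd_apply] using
    sum_sum_letterEmbedding_eq_zero _ T words_eq_zero Sum.isRight (fun t => if t then δ else γ)
      (Sum.elim α β)

/-- If binary words `T₁, …, T_r`, each with exactly `m` zeros and `n` ones, satisfy
`∑ₛ cₛ • w_{Tₛ}(α, β) = 0` for all `α, β` in a `k`-algebra `R` (char `k` = 0), then
the corresponding linear combinations of sums of `Φ_{Tₛ}^{f,g}` over injections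
`f : [k'] ↪ (Tₛ)₀`, `g : [l] ↪ (Tₛ)₁` also vanish. -/
theorem bint_lincomb_zero_on_kets (k : Type*) [Field k] [CharZero k]
    (R : Type*) [Ring R] [Algebra k R]
    (m n r : ℕ) (T : Fin r → Fin (m + n) → Bool)
    (hm : ∀ s, (Finset.univ.filter fun i => T s i = false).card = m)
    (hn : ∀ s, (Finset.univ.filter fun i => T s i = true).card = n)
    (c : Fin r → k)
    (hdep : ∀ α β : R,
      ∑ s, c s • ((List.ofFn fun i => if T s i then β else α).reverse).prod = 0)
    (k' l : ℕ) (hk : k' ≤ m) (hl : l ≤ n)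
    (α : Fin k' → R) (β : Fin l → R) (γ δ : R) :
    ∑ s, c s •
      (∑ f : Fin k' ↪ {i : Fin (m + n) // T s i = false},
        ∑ g : Fin l ↪ {i : Fin (m + n) // T s i = true},
          phiFn (T s) f g α β γ δ) = 0 := by
  exact bint_lincomb_zero_on_kets_general T c hdep α β γ δ
end

section
/- Let k be a field of characteristic zero and n ≥ 1. There exists a nonzero element p of the free (noncommutative) k-algebra on two generators x and y such that for all n×n matrices α, β over k, the image of p under the unique k-algebra homomorphism from the free algebra to the matrix ring M_n(k) sending x to α and y to β is the zero matrix. -/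
/-!
The identity is the standard polynomial `∑ σ, sign σ • v (σ 0) * ⋯ * v (σ (N - 1))` evaluated at
`v i = x ^ i * y`. Being alternating and multilinear in the `v i`, it vanishes in every algebra
spanned as a module by fewer than `N` elements; for `n × n` matrices `N = n ^ 2 + 1` suffices. It is
nonzero in the free algebra because a word `x ^ i₀ y x ^ i₁ y ⋯` determines the exponents
`i₀, i₁, …`, so distinct permutations contribute distinct monomials.
-/

section FreeMonoid

open FreeMonoid

variable {X : Type*} {x y : X}

theorem freeMonoid_toList_of_pow (x : X) (a : ℕ) : toList (of x ^ a) = List.replicate a x := by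
  induction a with
  | zero => rfl
  | succ a ih => rw [pow_succ', toList_of_mul, ih, List.replicate_succ]

theorem freeMonoid_of_pow_mul_of_mul_inj (hxy : x ≠ y) {a b : ℕ} {u v : FreeMonoid X}
    (h : of x ^ a * of y * u = of x ^ b * of y * v) : a = b ∧ u = v := by
  classical
  have h_list : List.replicate a x ++ y :: toList u = List.replicate b x ++ y :: toList v := by
    simpa [freeMonoid_toList_of_pow] using congrArg toList h
  have hab : a = b := by
    simpa [hxy.symm] using congrArg (List.takeWhile (· = x)) h_list
  subst hab
  exact ⟨rfl, mul_left_cancel h⟩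

theorem freeMonoid_lift_of_pow_mul_of_injective (hxy : x ≠ y) :
    Function.Injective (FreeMonoid.lift fun i : ℕ => of x ^ i * of y) := by
  intro u v h
  induction u using FreeMonoid.inductionOn' generalizing v with
  | one =>
    cases v using FreeMonoid.casesOn with
    | one => rfl
    | of_mul b v => exact absurd h.symm (by simp)
  | of_mul a u ih =>
    cases v using FreeMonoid.casesOn with
    | one => exact absurd h (by simp)
    | of_mul b v =>
      simp only [map_mul, lift_eval_of] at h
      obtain ⟨rfl, h_tail⟩ := freeMonoid_of_pow_mul_of_mul_inj hxy h
      rw [ih h_tail]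

end FreeMonoid

theorem linearIndependent_freeMonoid_lift_ι (R X : Type*) [CommSemiring R] :
    LinearIndependent R (FreeMonoid.lift (FreeAlgebra.ι R (X := X))) := by
  have coe_basis : ⇑(FreeAlgebra.basisFreeMonoid R X) = FreeMonoid.lift (FreeAlgebra.ι R) := by
    ext w
    simp [FreeAlgebra.basisFreeMonoid, FreeAlgebra.equivMonoidAlgebraFreeMonoid]
  exact coe_basis ▸ (FreeAlgebra.basisFreeMonoid R X).linearIndependent

theorem alternatingMap_eq_zero_of_span_eq_top {R M M' ι κ : Type*} [CommSemiring R]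
    [AddCommMonoid M] [Module R M] [AddCommMonoid M'] [Module R M'] [Fintype ι] [Fintype κ]
    (f : M [⋀^ι]→ₗ[R] M') {s : κ → M} (hs : Submodule.span R (Set.range s) = ⊤)
    (hcard : Fintype.card κ < Fintype.card ι) : f = 0 := by
  have hs_surj : Function.Surjective (Fintype.linearCombination R s) := by
    rw [← LinearMap.range_eq_top, Fintype.range_linearCombination, hs]
  have h_comp : f.compLinearMap (Fintype.linearCombination R s) = 0 :=
    (Pi.basisFun R κ).ext_alternating fun v hv =>
      absurd (Fintype.card_le_of_injective v hv) hcard.not_ge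
  ext m
  choose c hc using fun i => hs_surj (m i)
  simpa [hc] using congrArg (· c) h_comp

/-- The standard polynomial `S_N`, the signed sum over all orderings of the product of `N`
elements of an algebra. It is bundled as an alternating map of its arguments, so that the identities
it satisfies follow from multilinear algebra. -/
noncomputable def standardPolynomial (R A : Type*) [CommSemiring R] [Ring A] [Algebra R A] (N : ℕ) :
    A [⋀^Fin N]→ₗ[R] A :=
  MultilinearMap.alternatization (MultilinearMap.mkPiAlgebraFin R N A)

section StandardPolynomial

variable {A B : Type*} [Ring A] [Ring B] {N : ℕ}

theorem standardPolynomial_apply (R : Type*) [CommSemiring R] [Algebra R A] (v : Fin N → A) :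
    standardPolynomial R A N v =
      ∑ σ : Equiv.Perm (Fin N), Equiv.Perm.sign σ • (List.ofFn (v ∘ σ)).prod := by
  simp [standardPolynomial, MultilinearMap.alternatization_apply, Function.comp_def]

theorem map_standardPolynomial {R : Type*} [CommSemiring R] [Algebra R A] [Algebra R B]
    (f : A →ₐ[R] B) (v : Fin N → A) :
    f (standardPolynomial R A N v) = standardPolynomial R B N (f ∘ v) := by
  simp only [standardPolynomial_apply, map_sum, Units.smul_def, map_zsmul, map_list_prod,
    List.map_ofFn, Function.comp_assoc]

theorem standardPolynomial_ne_zero {R : Type*} [CommRing R] [Nontrivial R] [Algebra R A]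
    {v : Fin N → A}
    (hv : LinearIndependent R fun σ : Equiv.Perm (Fin N) => (List.ofFn (v ∘ σ)).prod) :
    standardPolynomial R A N v ≠ 0 := by
  intro h
  rw [standardPolynomial_apply] at h
  have sign_eq_zero : ∀ σ : Equiv.Perm (Fin N), ((Equiv.Perm.sign σ : ℤ) : R) = 0 :=
    Fintype.linearIndependent_iff.mp hv _
      (by simpa only [Units.smul_def, Int.cast_smul_eq_zsmul] using h)
  simpa using sign_eq_zero 1

end StandardPolynomial

section FreeAlgebra

open FreeAlgebra

variable (R : Type*) [CommRing R] [Nontrivial R]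

theorem standardPolynomial_ι_pow_mul_ι_ne_zero {X : Type*} {x y : X} (hxy : x ≠ y) (N : ℕ) :
    standardPolynomial R (FreeAlgebra R X) N (fun i => ι R x ^ (i : ℕ) * ι R y) ≠ 0 := by
  let exponents (σ : Equiv.Perm (Fin N)) : FreeMonoid ℕ :=
    FreeMonoid.ofList (List.ofFn fun i => (σ i : ℕ))
  let monomial (u : FreeMonoid ℕ) : FreeMonoid X :=
    FreeMonoid.lift (fun i : ℕ => FreeMonoid.of x ^ i * FreeMonoid.of y) u
  have exponents_injective : Function.Injective exponents := fun σ τ h =>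
    Equiv.ext fun i => Fin.ext (congrFun (List.ofFn_injective (FreeMonoid.ofList.injective h)) i)
  have h_indep := (linearIndependent_freeMonoid_lift_ι R X).comp (monomial ∘ exponents)
    ((freeMonoid_lift_of_pow_mul_of_injective hxy).comp exponents_injective)
  have h_prod : (fun σ : Equiv.Perm (Fin N) =>
      (List.ofFn ((fun i : Fin N => ι R x ^ (i : ℕ) * ι R y) ∘ σ)).prod) =
        FreeMonoid.lift (ι R) ∘ monomial ∘ exponents := by
    ext σ
    simp [monomial, exponents, FreeMonoid.lift_ofList, map_list_prod, Function.comp_def]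
  exact standardPolynomial_ne_zero (h_prod ▸ h_indep)

theorem exists_polynomial_identity_matrices_general (X A : Type*) [Nontrivial X] [Ring A]
    [Algebra R A] [Module.Finite R A] :
    ∃ p : FreeAlgebra R X, p ≠ 0 ∧ ∀ f : X → A, lift R f p = 0 := by
  obtain ⟨d, s, hs⟩ := Module.Finite.exists_fin (R := R) (M := A)
  obtain ⟨x, y, hxy⟩ := exists_pair_ne X
  refine ⟨_, standardPolynomial_ι_pow_mul_ι_ne_zero R hxy (d + 1), fun f => ?_⟩
  have h_identity : standardPolynomial R A (d + 1) = 0 :=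
    alternatingMap_eq_zero_of_span_eq_top _ hs (by simp)
  rw [map_standardPolynomial, h_identity, AlternatingMap.zero_apply]

end FreeAlgebra

/-- For a field `k` of characteristic zero and `n ≥ 1`, there is a nonzero noncommutative
polynomial in two variables which vanishes identically on `n × n` matrices over `k`. -/
theorem exists_polynomial_identity_matrices (k : Type*) [Field k] [CharZero k]
    (n : ℕ) (hn : 1 ≤ n) :
    ∃ p : FreeAlgebra k (Fin 2), p ≠ 0 ∧
      ∀ α β : Matrix (Fin n) (Fin n) k,
        (FreeAlgebra.lift k ![α, β]) p = 0 := by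
  obtain ⟨p, hp, h_eval⟩ :=
    exists_polynomial_identity_matrices_general k (Fin 2) (Matrix (Fin n) (Fin n) k)
  exact ⟨p, hp, fun α β => h_eval ![α, β]⟩
end

section
/- Let k be a field of characteristic zero, let d ≥ 1, and let T_1, …, T_r ∈ {0,1}^* be pairwise distinct binary words each of length at most d. If n is an integer with 2n > d, then the functions M_n(k) × M_n(k) → M_n(k), (α, β) ↦ w_{T_s}(α, β), for s = 1, …, r, are linearly independent over k: if c_1, …, c_r ∈ k satisfy Σ_{s=1}^r c_s · w_{T_s}(α, β) = 0 for all α, β ∈ M_n(k), then c_1 = ⋯ = c_r = 0. -/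
/-- `w_T(α, β) = a_N ⋯ a_1` where `a_i = α` if the `i`-th digit of `T` is `0` and `a_i = β`
if it is `1`. -/
def wordEval {R : Type*} [Monoid R] (T : List Bool) (α β : R) : R :=
  (T.reverse.map fun b => if b then β else α).prod

/-!
Given a vanishing linear combination, let `L = l_0 ⋯ l_{N-1}` be a word of maximal length among
those with nonzero coefficient. As `N ≤ 2n - 1`, there are matrix units
`e_i = E_{⌊i/2⌋, ⌊(i+1)/2⌋}` for `i < N`; the product `e_0 e_1 ⋯ e_{N-1}` has an entry `1`, while
`e_j e_i = 0` for `i < j`. For each set `A` of indices, substitute for the letter `b` the sum of the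
`e_i` with `i ∈ A` and `l_i = b`, and take the alternating sum over all `A`. By inclusion–exclusion,
a word of length at most `N` contributes only the products in which every `e_i` occurs exactly once.
Such a product vanishes unless the `e_i` occur in increasing order, and then they spell `L`. So what
remains is `e_0 ⋯ e_{N-1}` times the coefficient of `L`, which therefore vanishes.
-/

open Finset

section MixedDifference

variable {ι κ M M' : Type*} [DecidableEq ι] [AddCommGroup M] [AddCommGroup M']

/-- The mixed finite difference at `∅`, in the directions `B`, of a function `f` of finite sets:
the alternating sum of inclusion–exclusion, in which `f B` has sign `+1`. -/
def mixedDifference (f : Finset ι → M) (B : Finset ι) : M :=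
  ∑ A ∈ B.powerset, (-1 : ℤ) ^ #(B \ A) • f A

lemma mixedDifference_congr {f g : Finset ι → M} {B : Finset ι} (h : ∀ A ⊆ B, f A = g A) :
    mixedDifference f B = mixedDifference g B :=
  sum_congr rfl fun A hA => by rw [h A (mem_powerset.mp hA)]

lemma map_mixedDifference (φ : M →+ M') (f : Finset ι → M) (B : Finset ι) :
    φ (mixedDifference f B) = mixedDifference (fun A => φ (f A)) B := by
  simp only [mixedDifference, map_sum, map_zsmul]

lemma mixedDifference_sum (s : Finset κ) (f : κ → Finset ι → M) (B : Finset ι) :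
    mixedDifference (fun A => ∑ t ∈ s, f t A) B = ∑ t ∈ s, mixedDifference (f t) B := by
  simp only [mixedDifference, smul_sum]
  exact sum_comm

@[simp]
lemma mixedDifference_zero (B : Finset ι) : mixedDifference (fun _ => (0 : M)) B = 0 := by
  simp [mixedDifference]

@[simp]
lemma mixedDifference_empty (f : Finset ι → M) : mixedDifference f ∅ = f ∅ := by
  simp [mixedDifference]

lemma mixedDifference_insert {i : ι} {B : Finset ι} (hi : i ∉ B) (f : Finset ι → M) :
    mixedDifference f (insert i B) =
      mixedDifference (fun A => f (insert i A)) B - mixedDifference f B := by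
  rw [mixedDifference, sum_powerset_insert hi, add_comm, sub_eq_add_neg, mixedDifference,
    mixedDifference, ← sum_neg_distrib]
  congr 1 <;> refine sum_congr rfl fun A hA => ?_
  · rw [insert_sdiff_insert, sdiff_insert_of_notMem hi]
  · have hiA : i ∉ A := fun h => hi (mem_powerset.mp hA h)
    rw [insert_sdiff_of_notMem B hiA, card_insert_of_notMem (by simp [hi]), pow_succ,
      mul_neg_one, neg_smul]

lemma mixedDifference_const {B : Finset ι} (hB : B.Nonempty) (m : M) :
    mixedDifference (fun _ => m) B = 0 := by
  obtain ⟨i, hi⟩ := hB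
  rw [← insert_erase hi, mixedDifference_insert (notMem_erase i B), sub_self]

lemma mixedDifference_ite_mem {i : ι} {B : Finset ι} (hi : i ∈ B) (f : Finset ι → M) :
    mixedDifference (fun A => if i ∈ A then f A else 0) B =
      mixedDifference f B + mixedDifference f (B.erase i) := by
  have hni : i ∉ B.erase i := notMem_erase i B
  have hvanish : mixedDifference (fun A => if i ∈ A then f A else 0) (B.erase i) = 0 := by
    rw [mixedDifference_congr (g := fun _ => 0), mixedDifference_zero]
    exact fun A hA => if_neg fun hiA => hni (hA hiA)
  rw [← insert_erase hi, mixedDifference_insert hni, mixedDifference_insert hni,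
    erase_insert hni, hvanish]
  simp only [mem_insert_self, if_true, sub_zero, sub_add_cancel]

lemma mixedDifference_sum_mem (h : ι → Finset ι → M) (B : Finset ι) :
    mixedDifference (fun A => ∑ i ∈ A, h i A) B =
      ∑ i ∈ B, (mixedDifference (h i) B + mixedDifference (h i) (B.erase i)) := by
  calc mixedDifference (fun A => ∑ i ∈ A, h i A) B
      = mixedDifference (fun A => ∑ i ∈ B, if i ∈ A then h i A else 0) B :=
        mixedDifference_congr fun A hA => by rw [sum_ite_mem, inter_eq_right.mpr hA]
    _ = ∑ i ∈ B, mixedDifference (fun A => if i ∈ A then h i A else 0) B :=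
        mixedDifference_sum B _ B
    _ = _ := sum_congr rfl fun i hi => mixedDifference_ite_mem hi (h i)

end MixedDifference

lemma toFinset_cons_erase_of_ne {ι : Type*} [DecidableEq ι] {i j : ι} {σ : List ι} (hσ : σ.Nodup)
    (hij : i ≠ j) : (i :: σ).toFinset.erase j = (i :: σ.erase j).toFinset := by
  ext x
  simp only [mem_erase, List.mem_toFinset, List.mem_cons, hσ.mem_erase_iff]
  grind

section LetterSum

variable {ι α R : Type*} [DecidableEq α]

/-- The value substituted for the letter `b` when each index `i` carries the element `a i` and the
label `ℓ i`: the sum of the elements labelled `b` whose index lies in `A`. -/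
def letterSum [AddCommMonoid R] (a : ι → R) (ℓ : ι → α) (A : Finset ι) (b : α) : R :=
  ∑ i ∈ A, if ℓ i = b then a i else 0

variable [DecidableEq ι] [Ring R]

lemma mixedDifference_prod_letterSum_cons (a : ι → R) (ℓ : ι → α) (b : α) (S : List α)
    (B : Finset ι) :
    mixedDifference (fun A => ((b :: S).map (letterSum a ℓ A)).prod) B =
      ∑ i ∈ B, (if ℓ i = b then a i else 0) *
        (mixedDifference (fun A => (S.map (letterSum a ℓ A)).prod) B +
          mixedDifference (fun A => (S.map (letterSum a ℓ A)).prod) (B.erase i)) := by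
  have hmul (x : R) (f : Finset ι → R) (B : Finset ι) :
      mixedDifference (fun A => x * f A) B = x * mixedDifference f B :=
    (map_mixedDifference (AddMonoidHom.mulLeft x) f B).symm
  simp only [List.map_cons, List.prod_cons, letterSum, sum_mul, mixedDifference_sum_mem, hmul,
    mul_add]

theorem mixedDifference_prod_letterSum (a : ι → R) (ℓ : ι → α) {S : List α} {σ : List ι}
    (hnodup : σ.Nodup) (ha : σ.Pairwise fun i j => a j * a i = 0) (hlen : S.length ≤ σ.length) :
    mixedDifference (fun A => (S.map (letterSum a ℓ A)).prod) σ.toFinset =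
      if S = σ.map ℓ then (σ.map a).prod else 0 := by
  induction S generalizing σ with
  | nil =>
    cases σ with
    | nil => simp
    | cons i σ => simpa using mixedDifference_const (by simp) (1 : R)
  | cons b S ih =>
    have hshort : mixedDifference (fun A => (S.map (letterSum a ℓ A)).prod) σ.toFinset = 0 := by
      rw [ih hnodup ha (by grind), if_neg (by grind)]
    rw [mixedDifference_prod_letterSum_cons]
    simp only [hshort, zero_add, ite_mul, zero_mul]
    obtain _ | ⟨i, σ⟩ := σ
    · simp at hlen
    obtain ⟨hiσ, hσ⟩ := List.nodup_cons.mp hnodup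
    obtain ⟨hai, haσ⟩ := List.pairwise_cons.mp ha
    have hfirst : (i :: σ).toFinset.erase i = σ.toFinset := by simp [hiσ]
    -- If `a j` is taken before `a i`, then what follows it is a product starting with `a i`.
    have hlater (j : ι) (hj : j ∈ σ) :
        a j * mixedDifference (fun A => (S.map (letterSum a ℓ A)).prod)
          ((i :: σ).toFinset.erase j) = 0 := by
      have hsub : (i :: σ.erase j).Sublist (i :: σ) := List.erase_sublist.cons_cons i
      rw [toFinset_cons_erase_of_ne hσ (by grind), ih (hnodup.sublist hsub) (ha.sublist hsub)
        (by grind)]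
      split_ifs
      · rw [List.map_cons, List.prod_cons, ← mul_assoc, hai j hj, zero_mul]
      · exact mul_zero _
    rw [sum_eq_single_of_mem i (by simp), hfirst, ih hσ haσ (by simpa using hlen)]
    · simp only [List.map_cons, List.prod_cons, List.cons.injEq, eq_comm (a := b)]
      split_ifs <;> simp_all
    · intro j hj hji
      rw [hlater j (by simpa [hji] using hj), ite_self]

end LetterSum

section Staircase

variable (n : ℕ) [NeZero n] (R : Type*) [Semiring R]

/-- The `i`-th matrix unit on the path `(0,0), (0,1), (1,1), (1,2), …` of matrix positions. The
indices are taken modulo `n`, so this is the intended unit only for `i + 1 < 2 * n`. -/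
def staircaseUnit (i : ℕ) : Matrix (Fin n) (Fin n) R :=
  Matrix.single (Fin.ofNat n (i / 2)) (Fin.ofNat n ((i + 1) / 2)) 1

variable {n} in
lemma staircaseUnit_mul_eq_zero {i j : ℕ} (hij : i < j) (hj : j + 1 < 2 * n) :
    staircaseUnit n R j * staircaseUnit n R i = 0 := by
  refine Matrix.single_mul_single_of_ne _ _ _ _ (fun h => ?_) _
  have hmod : (j + 1) / 2 % n = i / 2 % n := congrArg Fin.val h
  rw [Nat.mod_eq_of_lt (by omega), Nat.mod_eq_of_lt (by omega)] at hmod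
  omega

lemma row_zero_prod_staircaseUnit (m : ℕ) :
    ((List.range m).map (staircaseUnit n R)).prod.row 0 = Pi.single (Fin.ofNat n (m / 2)) 1 := by
  simp only [← Matrix.single_one_vecMul]
  induction m with
  | zero => simp
  | succ m ih =>
    rw [List.range_succ, List.map_append, List.prod_append, ← Matrix.vecMul_vecMul, ih]
    ext v
    simp [staircaseUnit, Matrix.single_apply, Pi.single_apply, eq_comm]

variable {R} in
lemma eq_zero_of_smul_prod_staircaseUnit_eq_zero {c : R} {m : ℕ}
    (h : c • ((List.range m).map (staircaseUnit n R)).prod = 0) : c = 0 := by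
  have hone : ((List.range m).map (staircaseUnit n R)).prod 0 (Fin.ofNat n (m / 2)) = 1 :=
    (congrFun (row_zero_prod_staircaseUnit n R m) _).trans (Pi.single_eq_same _ _)
  simpa only [Matrix.smul_apply, hone, smul_eq_mul, mul_one, Matrix.zero_apply] using
    congrFun (congrFun h 0) (Fin.ofNat n (m / 2))

end Staircase

lemma mixedDifference_prod_letterSum_staircaseUnit {α R : Type*} [DecidableEq α] [Ring R] {n : ℕ}
    [NeZero n] {S L : List α} (hL : L.length < 2 * n) (hlen : S.length ≤ L.length) :
    mixedDifference (fun A => (S.map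
        (letterSum (fun i : Fin L.length => staircaseUnit n R i) L.get A)).prod) univ =
      if S = L then ((List.range L.length).map (staircaseUnit n R)).prod else 0 := by
  have hzero : (List.finRange L.length).Pairwise fun i j : Fin L.length =>
      staircaseUnit n R j * staircaseUnit n R i = 0 :=
    (List.pairwise_lt_finRange _).imp fun {i j} hij =>
      staircaseUnit_mul_eq_zero R hij (by omega)
  have hunits : (List.finRange L.length).map (fun i : Fin L.length => staircaseUnit n R i) =
      (List.range L.length).map (staircaseUnit n R) := by
    rw [← List.map_coe_finRange_eq_range, List.map_map, Function.comp_def]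
  have hdiff := mixedDifference_prod_letterSum (fun i : Fin L.length => staircaseUnit n R i) L.get
    (List.nodup_finRange _) hzero (by simpa using hlen)
  rwa [List.toFinset_finRange, hunits, List.map_get_finRange] at hdiff

lemma coeff_eq_zero_of_forall_length_le {ι α k : Type*} [Ring k] {n : ℕ} {T : ι → List α}
    (hT : Function.Injective T) {s : Finset ι} {c : ι → k}
    (h : ∀ X : α → Matrix (Fin n) (Fin n) k, ∑ t ∈ s, c t • ((T t).map X).prod = 0)
    {m : ι} (hm : m ∈ s) (hlen : (T m).length < 2 * n)
    (hmax : ∀ t ∈ s, c t ≠ 0 → (T t).length ≤ (T m).length) : c m = 0 := by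
  classical
  have : NeZero n := ⟨by omega⟩
  let X := letterSum (fun i : Fin (T m).length => staircaseUnit n k i) (T m).get
  have hterm (t : ι) (ht : t ∈ s) :
      mixedDifference (fun A => c t • ((T t).map (X A)).prod) univ =
        if t = m then c m • ((List.range (T m).length).map (staircaseUnit n k)).prod else 0 := by
    rcases eq_or_ne (c t) 0 with hct | hct
    · simp only [hct, zero_smul, mixedDifference_zero]
      split_ifs with htm
      · rw [← htm, hct, zero_smul]
      · rfl
    · refine (map_mixedDifference (DistribSMul.toAddMonoidHom _ (c t)) _ univ).symm.trans ?_
      rw [mixedDifference_prod_letterSum_staircaseUnit hlen (hmax t ht hct)]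
      simp only [hT.eq_iff]
      split_ifs with htm <;> simp [htm]
  refine eq_zero_of_smul_prod_staircaseUnit_eq_zero n (m := (T m).length) ?_
  calc c m • ((List.range (T m).length).map (staircaseUnit n k)).prod
      = ∑ t ∈ s, mixedDifference (fun A => c t • ((T t).map (X A)).prod) univ := by
        rw [sum_congr rfl hterm, sum_ite_eq_of_mem' s m _ hm]
    _ = mixedDifference (fun A => ∑ t ∈ s, c t • ((T t).map (X A)).prod) univ :=
        (mixedDifference_sum s _ univ).symm
    _ = 0 := by simp only [h, mixedDifference_zero]

theorem short_binary_words_linearly_independent_general {ι α k : Type*} [Ring k] {n : ℕ}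
    {T : ι → List α} (hT : Function.Injective T) (hlen : ∀ s, (T s).length < 2 * n) :
    LinearIndependent k fun s (X : α → Matrix (Fin n) (Fin n) k) => ((T s).map X).prod := by
  classical
  refine linearIndependent_iff'.mpr fun s c h i hi => by_contra fun hci => ?_
  obtain ⟨m, hm, hmax⟩ := exists_max_image {t ∈ s | c t ≠ 0} (fun t => (T t).length)
    ⟨i, mem_filter.mpr ⟨hi, hci⟩⟩
  obtain ⟨hms, hcm⟩ := mem_filter.mp hm
  refine hcm (coeff_eq_zero_of_forall_length_le hT (fun X => ?_) hms (hlen m)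
    fun t ht hct => hmax t (mem_filter.mpr ⟨ht, hct⟩))
  simpa using congrFun h X

lemma wordEval_apply_false_true {R : Type*} [Monoid R] (T : List Bool) (X : Bool → R) :
    wordEval T (X false) (X true) = (T.reverse.map X).prod := by
  rw [wordEval]
  congr 2
  ext b
  cases b <;> rfl

/-- Pairwise distinct binary words of length at most `d` give linearly independent functions
`(α, β) ↦ w_T(α, β)` on `n × n` matrices over a characteristic-zero field whenever `2n > d`. -/
theorem short_binary_words_linearly_independent (k : Type*) [Field k] [CharZero k]
    (d : ℕ) (hd : 1 ≤ d) (r : ℕ) (T : Fin r → List Bool)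
    (hT : Function.Injective T) (hlen : ∀ s, (T s).length ≤ d)
    (n : ℕ) (hn : d < 2 * n) (c : Fin r → k)
    (h : ∀ α β : Matrix (Fin n) (Fin n) k, ∑ s, c s • wordEval (T s) α β = 0) :
    ∀ s, c s = 0 := by
  have hindep := short_binary_words_linearly_independent_general (k := k)
    (List.reverse_injective.comp hT) fun s => by simpa using (hlen s).trans_lt hn
  refine Fintype.linearIndependent_iff.mp hindep c (funext fun X => ?_)
  simpa [wordEval_apply_false_true] using h (X false) (X true)
end

section
/- Let k be a field of characteristic zero and n ≥ 2, and let S, T ∈ {0,1}^* be distinct binary words. Then the functions M_n(k) × M_n(k) → M_n(k) given by (α, β) ↦ w_S(α, β) and (α, β) ↦ w_T(α, β) are linearly independent over k: if a, b ∈ k satisfy a · w_S(α, β) + b · w_T(α, β) = 0 for all α, β ∈ M_n(k), then a = b = 0. -/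
/-!
Evaluate words at the matrices `!![1, 0; 0, x]` and `!![1, 1; 0, x]`, padded by an identity block.
A word `t_1 ⋯ t_N` becomes `!![1, v; 0, x ^ N]` with `v = t_1 + t_2 x + ⋯ + t_N x ^ (N - 1)`. The
entry `1` shared by all words forces the coefficients of a vanishing combination to be opposite,
so if they are nonzero the two words take equal values for every `x`. Over an infinite domain the
polynomials `x ^ N` and `v` are then the same for both words, and they determine the length and
the digits.
-/

open Polynomial

theorem wordEval_cons {M : Type*} [Monoid M] (t : Bool) (T : List Bool) (α β : M) :
    wordEval (t :: T) α β = wordEval T α β * if t then β else α := by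
  simp [wordEval]

/-- The polynomial `t_1 + t_2 X + ⋯ + t_N X ^ (N - 1)` whose coefficients are the digits of the
binary word `t_1 ⋯ t_N`. It forgets trailing zeros, so it determines only words of known length. -/
noncomputable def wordPoly (R : Type*) [Semiring R] : List Bool → R[X]
  | [] => 0
  | t :: T => wordPoly R T * X + C (if t then 1 else 0)

theorem eq_of_length_eq_of_wordPoly_eq {R : Type*} [Semiring R] [Nontrivial R] :
    ∀ {S T : List Bool}, S.length = T.length → wordPoly R S = wordPoly R T → S = T
  | [], [], _, _ => rfl
  | s :: S, t :: T, hlen, hpoly => by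
    simp only [wordPoly] at hpoly
    have hhead : s = t := by
      have hcoeff := congr(coeff $hpoly 0)
      cases s <;> cases t <;> simp at hcoeff ⊢
    subst hhead
    have htail : wordPoly R S = wordPoly R T := Polynomial.ext fun m => by
      simpa only [coeff_add, coeff_mul_X, coeff_C_succ, add_zero] using congr(coeff $hpoly (m + 1))
    rw [eq_of_length_eq_of_wordPoly_eq (Nat.succ.inj hlen) htail]

section AffineMatrix

variable {R ι : Type*} [DecidableEq ι] {i j : ι}

/-- The matrix with block `!![1, v; 0, c]` in the rows and columns `i, j` and the identity
elsewhere. It is the affine map `y ↦ v + y * c` acting on row vectors `(1, y)`, so that a product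
of such matrices applies the leftmost map first. -/
def affineMatrix [Ring R] (i j : ι) (c v : R) : Matrix ι ι R :=
  1 + Matrix.single j j (c - 1) + Matrix.single i j v

theorem affineMatrix_apply_left_left [Ring R] (hij : i ≠ j) (c v : R) :
    affineMatrix i j c v i i = 1 := by
  simp [affineMatrix, hij.symm]

theorem affineMatrix_apply_left_right [Ring R] (hij : i ≠ j) (c v : R) :
    affineMatrix i j c v i j = v := by
  simp [affineMatrix, hij, hij.symm]

theorem affineMatrix_apply_right_right [Ring R] (hij : i ≠ j) (c v : R) :
    affineMatrix i j c v j j = c := by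
  simp [affineMatrix, hij]

variable [Fintype ι]

theorem affineMatrix_mul [Ring R] (hij : i ≠ j) (c v c' v' : R) :
    affineMatrix i j c v * affineMatrix i j c' v' = affineMatrix i j (c * c') (v * c' + v') := by
  have hscale : c * c' - 1 = (c - 1) + (c' - 1) + (c - 1) * (c' - 1) := by noncomm_ring
  have hshift : v * c' + v' = v + v * (c' - 1) + v' := by noncomm_ring
  simp only [affineMatrix, hscale, hshift, Matrix.single_add, add_mul, mul_add, one_mul, mul_one,
    Matrix.single_mul_single_same, Matrix.single_mul_single_of_ne _ _ _ _ hij.symm]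
  abel

theorem wordEval_affineMatrix [Ring R] (hij : i ≠ j) (x : R) (T : List Bool) :
    wordEval T (affineMatrix i j x 0) (affineMatrix i j x 1) =
      affineMatrix i j (x ^ T.length) ((wordPoly R T).eval x) := by
  induction T with
  | nil => simp [wordEval, wordPoly, affineMatrix]
  | cons t T ih =>
    rw [wordEval_cons, ih]
    cases t <;> simp [affineMatrix_mul hij, wordPoly, pow_succ]

theorem eq_of_forall_wordEval_affineMatrix_eq [CommRing R] [IsDomain R] [Infinite R] (hij : i ≠ j)
    {S T : List Bool}
    (h : ∀ x : R, wordEval S (affineMatrix i j x 0) (affineMatrix i j x 1) =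
      wordEval T (affineMatrix i j x 0) (affineMatrix i j x 1)) :
    S = T := by
  simp only [wordEval_affineMatrix hij] at h
  have hpow : (X : R[X]) ^ S.length = X ^ T.length := Polynomial.funext fun x => by
    simpa [affineMatrix_apply_right_right hij] using congr($(h x) j j)
  have hpoly : wordPoly R S = wordPoly R T := Polynomial.funext fun x => by
    simpa only [affineMatrix_apply_left_right hij] using congr($(h x) i j)
  have hlen : S.length = T.length := by simpa using congrArg natDegree hpow
  exact eq_of_length_eq_of_wordPoly_eq hlen hpoly

end AffineMatrix

theorem distinct_word_pair_linearly_independent_general {R ι : Type*} [CommRing R] [IsDomain R]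
    [Infinite R] [Fintype ι] [DecidableEq ι] [Nontrivial ι] {S T : List Bool} (hST : S ≠ T)
    {a b : R} (h : ∀ α β : Matrix ι ι R, a • wordEval S α β + b • wordEval T α β = 0) :
    a = 0 ∧ b = 0 := by
  obtain ⟨i, j, hij⟩ := exists_pair_ne ι
  have hsum : a + b = 0 := by
    simpa [wordEval_affineMatrix hij, affineMatrix_apply_left_left hij] using
      congr($(h (affineMatrix i j 0 0) (affineMatrix i j 0 1)) i i)
  obtain rfl : b = -a := eq_neg_of_add_eq_zero_right hsum
  suffices ha : a = 0 by simp [ha]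
  by_contra ha
  refine hST (eq_of_forall_wordEval_affineMatrix_eq (R := R) hij fun x => ?_)
  apply smul_right_injective _ ha
  simpa [← sub_eq_add_neg, sub_eq_zero] using h (affineMatrix i j x 0) (affineMatrix i j x 1)

/-- For distinct binary words `S ≠ T` and `n ≥ 2`, the functions `(α, β) ↦ w_S(α, β)` and
`(α, β) ↦ w_T(α, β)` on `n × n` matrices over a characteristic-zero field are linearly
independent. -/
theorem distinct_word_pair_linearly_independent (k : Type*) [Field k] [CharZero k]
    (n : ℕ) (hn : 2 ≤ n) (S T : List Bool) (hST : S ≠ T) (a b : k)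
    (h : ∀ α β : Matrix (Fin n) (Fin n) k,
      a • wordEval S α β + b • wordEval T α β = 0) :
    a = 0 ∧ b = 0 := by
  have : Nontrivial (Fin n) := Fin.nontrivial_iff_two_le.mpr hn
  exact distinct_word_pair_linearly_independent_general hST h
end
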